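/- Let h : ℝ → ℝ be continuous and proper (|h(t)| → ∞ as |t| → ∞), and assume that no value of h is attained at three distinct points. Then there exist homeomorphisms φ, ψ : ℝ → ℝ such that the composition ψ ∘ h ∘ φ is one of the four maps s ↦ s, s ↦ −s, s ↦ |s|, s ↦ −|s|. -/

import Mathlib

/-!
If `h` takes equal values at `a < b`, then a point `d` between them with `h d ≥ h a` gives some
value a third time as soon as `h` exceeds `h a` somewhere beyond `b`. Hence `h → +∞` at one end
forces `h` to dip strictly between points of equal value, and `h → -∞` at one end forces it to rise
strictly. When the two ends go opposite ways, both happen, so `h` is injective, and a continuous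
proper bijection is a homeomorphism. When both ends go to `+∞`, `h` attains a minimum at some `p`
and dipping makes it strictly monotone on either side of `p`; reflecting the left branch in the
level `h p` yields an increasing homeomorphism `g` with `|g| = h - h p`. The case of both ends going
to `-∞` follows by passing to `-h`.
-/

open Filter Function OrderDual Set

/-- No value of `f` is attained at three distinct points. -/
def AtMostTwoToOne {α β : Type*} (f : α → β) : Prop :=
  ∀ ⦃x y z : α⦄, f x = f y → f y = f z → x = y ∨ y = z ∨ x = z

/-- Strictly between two points of equal value, `f` stays strictly below that value: the weak form
of strict quasiconvexity in which only endpoints of equal height are compared. -/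
def DipsBetweenEqualValues {α β : Type*} [LT α] [LT β] (f : α → β) : Prop :=
  ∀ ⦃a d b : α⦄, a < d → d < b → f a = f b → f d < f a

/-- The graph of `f` with its part to the left of `p` reflected in the level `f p`, and that level
moved to `0`. It turns a valley with bottom `p` into an increasing function. -/
def unfoldAt {α β : Type*} [LinearOrder α] [Sub β] (f : α → β) (p t : α) : β :=
  f (max t p) - f (min t p)

theorem AtMostTwoToOne.injective_comp {α β γ : Type*} {f : α → β} {g : β → γ}
    (hf : AtMostTwoToOne f) (hg : Injective g) : AtMostTwoToOne (g ∘ f) :=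
  fun _ _ _ hxy hyz => hf (hg hxy) (hg hyz)

theorem DipsBetweenEqualValues.comp_ofDual {α β : Type*} [LT α] [LT β] {f : α → β}
    (hf : DipsBetweenEqualValues f) : DipsBetweenEqualValues (f ∘ ofDual) :=
  fun _ _ _ had hdb hab => (hf hdb had hab.symm).trans_eq hab.symm

section IntermediateValue

variable {α β : Type*} [ConditionallyCompleteLinearOrder α] [DenselyOrdered α]
  [TopologicalSpace α] [OrderTopology α] [LinearOrder β] [TopologicalSpace β]
  [OrderClosedTopology β] {f : α → β}

theorem tendsto_atTop_of_tendsto_sup_of_forall_ne {c : β} {N : α} (hc : Continuous f)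
    (hf : Tendsto f atTop (atBot ⊔ atTop)) (hne : ∀ t, N ≤ t → f t ≠ c) (hN : c < f N) :
    Tendsto f atTop atTop := by
  have habove : ∀ᶠ t in atTop, f t ∈ Ioi c := by
    filter_upwards [eventually_ge_atTop N] with t ht
    by_contra! htc
    obtain ⟨s, hs, hsc⟩ := intermediate_value_Icc' ht hc.continuousOn ⟨not_lt.1 htc, hN.le⟩
    exact hne s hs.1 hsc
  refine (tendsto_inf.2 ⟨hf, tendsto_principal.2 habove⟩).mono_right ?_
  rw [inf_sup_right, (disjoint_atBot_principal_Ioi c).eq_bot, bot_sup_eq]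
  exact inf_le_left

theorem tendsto_atTop_or_atBot_of_tendsto_sup [NoMinOrder β] [NoMaxOrder β]
    (hc : Continuous f) (hf : Tendsto f atTop (atBot ⊔ atTop)) :
    Tendsto f atTop atTop ∨ Tendsto f atTop atBot := by
  have : Nonempty α := ⟨sSup ∅⟩
  obtain ⟨c⟩ : Nonempty β := .map f this
  have hne : ∀ᶠ t in atTop, f t ≠ c :=
    hf.eventually (eventually_sup.2 ⟨eventually_ne_atBot c, eventually_ne_atTop c⟩)
  obtain ⟨N, hN⟩ := eventually_atTop.1 hne
  rcases (hN N le_rfl).lt_or_gt with hlt | hgt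
  · rw [sup_comm] at hf
    exact .inr <| tendsto_atTop_of_tendsto_sup_of_forall_ne (β := βᵒᵈ) hc hf hN hlt
  · exact .inl <| tendsto_atTop_of_tendsto_sup_of_forall_ne hc hf hN hgt

theorem AtMostTwoToOne.dipsBetweenEqualValues [DenselyOrdered β] [NoMaxOrder β]
    (hf : AtMostTwoToOne f) (hc : Continuous f) (htop : Tendsto f atTop atTop) :
    DipsBetweenEqualValues f := by
  intro a d b had hdb hab
  by_contra! had_le
  have had_ne : f a ≠ f d := fun hfad => by
    rcases hf hfad (hfad.symm.trans hab) with h | h | h <;> order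
  have : Nonempty α := ⟨a⟩
  obtain ⟨e, hae, hbe⟩ := ((htop.eventually_gt_atTop (f a)).and (eventually_ge_atTop b)).exists
  obtain ⟨v, hav, hv⟩ := exists_between (lt_min (had_le.lt_of_ne had_ne) hae)
  obtain ⟨hvd, hve⟩ := lt_min_iff.1 hv
  have hbv : f b < v := hab ▸ hav
  obtain ⟨x, ⟨-, hxd⟩, hx⟩ := intermediate_value_Ioo had.le hc.continuousOn ⟨hav, hvd⟩
  obtain ⟨y, ⟨hdy, hyb⟩, hy⟩ := intermediate_value_Ioo' hdb.le hc.continuousOn ⟨hbv, hvd⟩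
  obtain ⟨z, ⟨hbz, -⟩, hz⟩ := intermediate_value_Ioo hbe hc.continuousOn ⟨hbv, hve⟩
  rcases hf (hx.trans hy.symm) (hy.trans hz.symm) with h | h | h <;> order

theorem AtMostTwoToOne.bijective_of_tendsto [DenselyOrdered β] [NoMinOrder β] [NoMaxOrder β]
    (hf : AtMostTwoToOne f) (hc : Continuous f) (htop : Tendsto f atTop atTop)
    (hbot : Tendsto f atBot atBot) : Bijective f := by
  have hdips : DipsBetweenEqualValues f := hf.dipsBetweenEqualValues hc htop
  have hrises : DipsBetweenEqualValues (α := αᵒᵈ) (β := βᵒᵈ) f :=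
    AtMostTwoToOne.dipsBetweenEqualValues (α := αᵒᵈ) (β := βᵒᵈ) hf hc hbot
  have hne : ∀ a b, a < b → f a ≠ f b := fun a b hab hfab => by
    obtain ⟨d, had, hdb⟩ := exists_between hab
    have hbelow : f d < f a := hdips had hdb hfab
    have habove : f b < f d := hrises hdb had hfab.symm
    order
  exact ⟨.of_lt_imp_ne hne, hc.surjective htop hbot⟩

theorem DipsBetweenEqualValues.strictMonoOn_Ici (hf : DipsBetweenEqualValues f)
    (hc : Continuous f) {p : α} (hp : ∀ t, f p ≤ f t) : StrictMonoOn f (Ici p) := by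
  have hmono : MonotoneOn f (Ici p) := fun a ha b _ hab => by
    by_contra! hba
    obtain ⟨c, ⟨-, hca⟩, hcb⟩ := intermediate_value_Icc ha hc.continuousOn ⟨hp b, hba.le⟩
    have hca_lt : c < a := hca.lt_of_ne fun h => hba.ne (h ▸ hcb.symm)
    have hab_lt : a < b := hab.lt_of_ne fun h => hba.ne (h ▸ rfl)
    exact (hf hca_lt hab_lt hcb).not_gt (hcb ▸ hba)
  refine fun a ha b hb hab => (hmono ha hb hab.le).lt_of_ne fun hfab => ?_
  obtain ⟨d, had, hdb⟩ := exists_between hab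
  exact (hmono ha (ha.out.trans had.le) had.le).not_gt (hf had hdb hfab)

theorem DipsBetweenEqualValues.strictAntiOn_Iic (hf : DipsBetweenEqualValues f)
    (hc : Continuous f) {p : α} (hp : ∀ t, f p ≤ f t) : StrictAntiOn f (Iic p) :=
  fun _ ha _ hb hab =>
    hf.comp_ofDual.strictMonoOn_Ici (hc.comp continuous_ofDual) (p := toDual p) hp hb ha hab

end IntermediateValue

section Unfolding

variable {α β : Type*} [LinearOrder α] {f : α → β} {p t : α}

theorem unfoldAt_of_le [Sub β] (ht : t ≤ p) : unfoldAt f p t = f p - f t := by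
  rw [unfoldAt, max_eq_right ht, min_eq_left ht]

theorem unfoldAt_of_ge [Sub β] (ht : p ≤ t) : unfoldAt f p t = f t - f p := by
  rw [unfoldAt, max_eq_left ht, min_eq_right ht]

variable [AddCommGroup β] [LinearOrder β] [IsOrderedAddMonoid β]

theorem abs_unfoldAt (hp : ∀ t, f p ≤ f t) (t : α) : |unfoldAt f p t| = f t - f p := by
  rcases le_total t p with ht | ht
  · rw [unfoldAt_of_le ht, abs_sub_comm, abs_of_nonneg (sub_nonneg.2 (hp t))]
  · rw [unfoldAt_of_ge ht, abs_of_nonneg (sub_nonneg.2 (hp t))]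

theorem strictMono_unfoldAt (hanti : StrictAntiOn f (Iic p)) (hmono : StrictMonoOn f (Ici p)) :
    StrictMono (unfoldAt f p) := by
  refine StrictMonoOn.Iic_union_Ici (a := p) (fun a ha b hb hab => ?_) fun a ha b hb hab => ?_
  · rw [unfoldAt_of_le ha, unfoldAt_of_le hb]
    exact sub_lt_sub_left (hanti ha hb hab) _
  · rw [unfoldAt_of_ge ha, unfoldAt_of_ge hb]
    exact sub_lt_sub_right (hmono ha hb hab) _

theorem tendsto_unfoldAt_atTop (htop : Tendsto f atTop atTop) :
    Tendsto (unfoldAt f p) atTop atTop := by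
  refine (tendsto_atTop_add_const_right _ (-f p) htop).congr' ?_
  filter_upwards [eventually_ge_atTop p] with t ht
  rw [unfoldAt_of_ge ht, sub_eq_add_neg]

theorem tendsto_unfoldAt_atBot (hbot : Tendsto f atBot atTop) :
    Tendsto (unfoldAt f p) atBot atBot := by
  refine (tendsto_atBot_add_const_left _ (f p) (tendsto_neg_atTop_atBot.comp hbot)).congr' ?_
  filter_upwards [eventually_le_atBot p] with t ht
  rw [unfoldAt_of_le ht, sub_eq_add_neg, comp_apply]

end Unfolding

theorem AtMostTwoToOne.exists_orderIso_abs_eq_sub {α β : Type*}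
    [ConditionallyCompleteLinearOrder α] [DenselyOrdered α] [TopologicalSpace α] [OrderTopology α]
    [AddCommGroup β] [LinearOrder β] [IsOrderedAddMonoid β] [DenselyOrdered β] [NoMaxOrder β]
    [TopologicalSpace β] [OrderTopology β] {f : α → β} (hf : AtMostTwoToOne f)
    (hc : Continuous f) (htop : Tendsto f atTop atTop) (hbot : Tendsto f atBot atTop) :
    ∃ (e : α ≃o β) (c : β), ∀ t, |e t| = f t - c := by
  have : Nonempty α := ⟨sSup ∅⟩
  obtain ⟨p, hp⟩ : ∃ p, ∀ t, f p ≤ f t :=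
    hc.exists_forall_le ((hbot.sup htop).mono_left cocompact_le_atBot_atTop)
  have hdips : DipsBetweenEqualValues f := hf.dipsBetweenEqualValues hc htop
  have hmono : StrictMono (unfoldAt f p) :=
    strictMono_unfoldAt (hdips.strictAntiOn_Iic hc hp) (hdips.strictMonoOn_Ici hc hp)
  have hcont : Continuous (unfoldAt f p) := by unfold unfoldAt; fun_prop
  have hsurj : Surjective (unfoldAt f p) :=
    hcont.surjective (tendsto_unfoldAt_atTop htop) (tendsto_unfoldAt_atBot hbot)
  exact ⟨hmono.orderIsoOfSurjective _ hsurj, f p, abs_unfoldAt hp⟩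

theorem exists_homeomorph_leftInverse_of_bijective {X Y : Type*} [TopologicalSpace X]
    [TopologicalSpace Y] [T2Space Y] [WeaklyLocallyCompactSpace Y] {f : X → Y} (hc : Continuous f)
    (hproper : Tendsto f (cocompact X) (cocompact Y)) (hbij : Bijective f) :
    ∃ ψ : Y ≃ₜ X, LeftInverse ψ f := by
  have hclosed : IsClosedMap f := (isProperMap_iff_tendsto_cocompact.2 ⟨hc, hproper⟩).isClosedMap
  have hf : IsHomeomorph f := isHomeomorph_iff_continuous_isClosedMap_bijective.2
    ⟨hc, hclosed, hbij⟩
  exact ⟨(hf.homeomorph f).symm, (hf.homeomorph f).symm_apply_apply⟩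

theorem tendsto_cocompact_of_tendsto_norm_atTop {X E : Type*} [SeminormedAddGroup E]
    [ProperSpace E] {l : Filter X} {f : X → E} (hf : Tendsto (fun x => ‖f x‖) l atTop) :
    Tendsto f l (cocompact E) := by
  rw [← Metric.cobounded_eq_cocompact]
  exact tendsto_norm_atTop_iff_cobounded.1 hf

/-- A continuous proper function `h : ℝ → ℝ`, no value of which is attained at three
distinct points, is equivalent, up to homeomorphisms of domain and range, to one of the
four normal forms `s ↦ s`, `s ↦ -s`, `s ↦ |s|`, `s ↦ -|s|`. -/
theorem stmt4 (h : ℝ → ℝ) (hc : Continuous h)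
    (hproper : Filter.Tendsto (fun t => |h t|) (Filter.cocompact ℝ) Filter.atTop)
    (hno3 : ¬ ∃ t₁ t₂ t₃ : ℝ, t₁ ≠ t₂ ∧ t₂ ≠ t₃ ∧ t₁ ≠ t₃ ∧ h t₁ = h t₂ ∧ h t₂ = h t₃) :
    ∃ φ ψ : ℝ ≃ₜ ℝ,
      (∀ s : ℝ, ψ (h (φ s)) = s) ∨ (∀ s : ℝ, ψ (h (φ s)) = -s) ∨
      (∀ s : ℝ, ψ (h (φ s)) = |s|) ∨ (∀ s : ℝ, ψ (h (φ s)) = -|s|) := by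
  have htwo : AtMostTwoToOne h := fun x y z hxy hyz => by
    by_contra! ⟨hne_xy, hne_yz, hne_xz⟩
    exact hno3 ⟨x, y, z, hne_xy, hne_yz, hne_xz, hxy, hyz⟩
  have hcocompact : Tendsto h (cocompact ℝ) (cocompact ℝ) :=
    tendsto_cocompact_of_tendsto_norm_atTop hproper
  have of_bijective (hbij : Bijective h) : ∃ ψ : ℝ ≃ₜ ℝ, LeftInverse ψ h :=
    exists_homeomorph_leftInverse_of_bijective hc hcocompact hbij
  obtain ⟨hleft, hright⟩ := tendsto_sup.1 (cocompact_eq_atBot_atTop (α := ℝ) ▸ hcocompact)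
  rcases tendsto_atTop_or_atBot_of_tendsto_sup hc hright with htop | htop <;>
    rcases tendsto_atTop_or_atBot_of_tendsto_sup (α := ℝᵒᵈ) hc hleft with hbot | hbot
  · obtain ⟨e, c, he⟩ := htwo.exists_orderIso_abs_eq_sub hc htop hbot
    exact ⟨e.symm.toHomeomorph, .subRight c, .inr <| .inr <| .inl fun s => by simp [← he]⟩
  · obtain ⟨ψ, hψ⟩ := of_bijective (htwo.bijective_of_tendsto hc htop hbot)
    exact ⟨.refl ℝ, ψ, .inl hψ⟩
  · obtain ⟨ψ, hψ⟩ := of_bijective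
      (AtMostTwoToOne.bijective_of_tendsto (β := ℝᵒᵈ) htwo hc htop hbot)
    exact ⟨.refl ℝ, ψ, .inl hψ⟩
  · obtain ⟨e, c, he⟩ := (htwo.injective_comp neg_injective).exists_orderIso_abs_eq_sub hc.neg
      (tendsto_neg_atBot_atTop.comp htop) (tendsto_neg_atBot_atTop.comp hbot)
    refine ⟨e.symm.toHomeomorph, .addRight c, .inr <| .inr <| .inr fun s => ?_⟩
    have hs : |s| = -h (e.symm s) - c := by simpa using he (e.symm s)
    change h (e.symm s) + c = -|s|
    linarith
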